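/- Let n ≥ 2 and 𝐚 = (a₁,a₂) ∈ [1,∞)² with a₁ ≤ n < a₂, and set ω_𝐚(y) = (1−|y|^{a₁})^{1/a₂}. For k ≥ 1 let χ_k^{a₁}(y) be the indicator of {y : 2^{−k} ≤ 1−|y|^{a₁} ≤ 2^{1−k}}, define 𝒜^k_{(t₁,t₂)}(f,g)(x) = ∫ f(x−t₁y) χ_k^{a₁}(y) ω_𝐚(y)^{n−a₂} 𝔄g(x, t₂ ω_𝐚(y)) dy, and ℳ^k(f,g)(x) = sup_{t₁,t₂>0} |𝒜^k_{(t₁,t₂)}(f,g)(x)|. Then there is a constant C such that for all nonnegative measurable f, g and all x ∈ ℝⁿ and all k ≥ 1: ℳ^k(f,g)(x) ≤ C 2^{k(a₂−n)/a₂} Mf(x) ℳ_s g(x) and ℳ^k(f,g)(x) ≤ C 2^{−kn/a₂} ℳ_s f(x) Mg(x). -/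

import Mathlib

open MeasureTheory Metric Set
open scoped ENNReal NNReal

noncomputable section

abbrev Rn (n : ℕ) : Type := EuclideanSpace ℝ (Fin n)

/-- Surface measure on the unit sphere `𝕊^{n-1} ⊆ ℝⁿ`: the `(n-1)`-dimensional
Hausdorff measure restricted to the sphere. -/
def μSph (n : ℕ) : Measure (Rn n) :=
  (μH[((n : ℝ) - 1)]).restrict (sphere (0 : Rn n) 1)

/-- The spherical average `𝔄g(x,t) = ∫_{𝕊^{n-1}} g(x - tθ) dσ(θ)` for nonnegative `g`. -/
def sphAvgE (n : ℕ) (g : Rn n → ℝ) (x : Rn n) (t : ℝ) : ℝ≥0∞ :=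
  ∫⁻ θ, ENNReal.ofReal (g (x - t • θ)) ∂(μSph n)

/-- The weight `ω_𝐚(y) = (1 - |y|^{a₁})^{1/a₂}`. -/
def omegaW (a₁ a₂ : ℝ) {n : ℕ} (y : Rn n) : ℝ := (1 - ‖y‖ ^ a₁) ^ (1 / a₂)

/-- The Hardy–Littlewood maximal function on `ℝⁿ`. -/
def HLMax (n : ℕ) (f : Rn n → ℝ) (x : Rn n) : ℝ≥0∞ :=
  ⨆ r ∈ Ioi (0 : ℝ), (∫⁻ y in ball x r, ENNReal.ofReal |f y|) / volume (ball x r)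

/-- The spherical maximal function `ℳ_s`. -/
def sphMax (n : ℕ) (f : Rn n → ℝ) (x : Rn n) : ℝ≥0∞ :=
  ⨆ t ∈ Ioi (0 : ℝ), sphAvgE n f x t

/-- The dyadic piece `𝒜^k_{(t₁,t₂)}(f,g)(x)`, where the `y`-integration is
restricted to `{y : 2^{-k} ≤ 1 - |y|^{a₁} ≤ 2^{1-k}}`. -/
def dyadicAvg (n : ℕ) (a₁ a₂ : ℝ) (k : ℕ) (f g : Rn n → ℝ) (t₁ t₂ : ℝ) (x : Rn n) : ℝ≥0∞ :=
  ∫⁻ y in {y : Rn n | 2 ^ (-(k : ℝ)) ≤ 1 - ‖y‖ ^ a₁ ∧ 1 - ‖y‖ ^ a₁ ≤ 2 ^ (1 - (k : ℝ))},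
    ENNReal.ofReal (f (x - t₁ • y)) *
      ENNReal.ofReal ((omegaW a₁ a₂ y) ^ ((n : ℝ) - a₂)) *
      sphAvgE n g x (t₂ * omegaW a₁ a₂ y)

/-- The dyadic maximal operator `ℳ^k(f,g)(x) = sup_{t₁,t₂>0} |𝒜^k_{(t₁,t₂)}(f,g)(x)|`. -/
def dyadicMax (n : ℕ) (a₁ a₂ : ℝ) (k : ℕ) (f g : Rn n → ℝ) (x : Rn n) : ℝ≥0∞ :=
  ⨆ t₁ ∈ Ioi (0 : ℝ), ⨆ t₂ ∈ Ioi (0 : ℝ), dyadicAvg n a₁ a₂ k f g t₁ t₂ x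

/-!
Integration in polar coordinates uses the measure `μ.toSphere`, for which a cap of radius `d` has
measure comparable to `d ^ (n - 1)`: the cone over the cap is covered by about `1 / d` balls of
radius `2 * d` centred on its axis, and contains about `1 / d` disjoint balls of radius `d / 8`.
A covering argument then makes `μ.toSphere` and the Hausdorff measure `μH[n - 1]` on the sphere
comparable.

On the `k`-th shell, `ω ^ (n - a₂)` is comparable to `2 ^ (k * (a₂ - n) / a₂)`. The first bound
follows by estimating the spherical averages of `g` by `sphMax` and integrating `f` over the unit
ball. For the second, polar coordinates in `y` bring out spherical averages of `f`, which `sphMax`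
bounds, and leave a radial integral; the substitution `s = ω(r)` has a Jacobian that absorbs
`ω ^ (n - a₂)` up to the factor `s ^ (n - 1)`, since `r ^ (n - 1) ≤ r ^ (a₁ - 1)`. What remains is
the integral of `g` over a ball of radius `2 ^ ((1 - k) / a₂)`.
-/

lemma le_of_forall_isOpen_le {X : Type*} [TopologicalSpace X] [MeasurableSpace X]
    {μ ν : Measure X} [ν.OuterRegular] (h : ∀ U, IsOpen U → μ U ≤ ν U) : μ ≤ ν := by
  refine Measure.le_iff'.2 fun A => ?_
  rw [A.measure_eq_iInf_isOpen ν]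
  exact le_iInf₂ fun U hAU => le_iInf fun hU => (measure_mono hAU).trans (h U hU)

section PseudoMetricSpace

variable {X : Type*} [PseudoMetricSpace X]

lemma ediam_closedBall_le_ofReal_two_mul (x : X) (r : ℝ) :
    ediam (closedBall x r) ≤ ENNReal.ofReal (2 * r) :=
  ediam_le fun y hy z hz => by
    rw [edist_dist]
    refine ENNReal.ofReal_le_ofReal ((dist_triangle_right y z x).trans ?_)
    rw [mem_closedBall] at hy hz
    linarith

lemma exists_pairwiseDisjoint_closedBall_subset_cover [SecondCountableTopology X] {U : Set X}
    (hU : IsOpen U) {δ : ℝ} (hδ : 0 < δ) :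
    ∃ (u : Set X) (r : X → ℝ), u.Countable ∧ (∀ x, 0 < r x ∧ r x ≤ δ) ∧
      (u.PairwiseDisjoint fun x => closedBall x (r x)) ∧
      (⋃ x ∈ u, closedBall x (r x)) ⊆ U ∧ U ⊆ ⋃ x : u, closedBall (x : X) (5 * r x) := by
  have hradius : ∀ x, ∃ r, (0 < r ∧ r ≤ δ) ∧ (x ∈ U → closedBall x r ⊆ U) := fun x => by
    by_cases hx : x ∈ U
    · obtain ⟨ε, hε, hεU⟩ := nhds_basis_closedBall.mem_iff.1 (hU.mem_nhds hx)
      exact ⟨min ε δ, ⟨lt_min hε hδ, min_le_right _ _⟩,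
        fun _ => (closedBall_subset_closedBall (min_le_left _ _)).trans hεU⟩
    · exact ⟨δ, ⟨hδ, le_rfl⟩, fun h => absurd h hx⟩
  choose r hr hrU using hradius
  obtain ⟨u, huU, hdisj, hcover⟩ := Vitali.exists_disjoint_subfamily_covering_enlargement_closedBall
    U id r δ (fun x _ => (hr x).2) 5 (by norm_num)
  refine ⟨u, r, hdisj.countable_of_nonempty_interior fun x _ =>
    ⟨x, mem_interior_iff_mem_nhds.2 (closedBall_mem_nhds x (hr x).1)⟩, hr, hdisj,
    iUnion₂_subset fun x hx => hrU x (huU hx), fun x hx => ?_⟩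
  obtain ⟨y, hyu, hxy⟩ := hcover x hx
  exact mem_iUnion.2 ⟨⟨y, hyu⟩, hxy (mem_closedBall_self (hr x).1.le)⟩

variable [MeasurableSpace X] {ν : Measure X} {c : ℝ≥0} {d : ℝ}

lemma measure_le_mul_ediam_rpow_of_measure_closedBall_le
    (h : ∀ (x : X) (r : ℝ), 0 < r → r ≤ 1 → ν (closedBall x r) ≤ c * ENNReal.ofReal r ^ d)
    {s : Set X} (hs : ediam s < 1) : ν s ≤ c * ediam s ^ d := by
  obtain rfl | ⟨x, hx⟩ := s.eq_empty_or_nonempty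
  · simp
  have hle : ∀ ρ ∈ Ioo (ediam s) 1, ν s ≤ c * ρ ^ d := by
    rintro ρ ⟨hsρ, hρ1⟩
    have hρ : ρ ≠ ∞ := (hρ1.trans ENNReal.one_lt_top).ne
    have hsub : s ⊆ closedBall x ρ.toReal := fun y hy => by
      rw [mem_closedBall, dist_edist]
      exact ENNReal.toReal_mono hρ ((edist_le_ediam_of_mem hy hx).trans hsρ.le)
    have hball := h x ρ.toReal (ENNReal.toReal_pos hsρ.ne_bot hρ)
      (by simpa using ENNReal.toReal_mono ENNReal.one_ne_top hρ1.le)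
    rw [ENNReal.ofReal_toReal hρ] at hball
    exact (measure_mono hsub).trans hball
  have hcont : Continuous fun ρ : ℝ≥0∞ => c * ρ ^ d :=
    (ENNReal.continuous_const_mul ENNReal.coe_ne_top).comp ENNReal.continuous_rpow_const
  -- Letting `ρ` decrease to `ediam s` avoids a case split on `ediam s = 0`.
  have := nhdsGT_neBot_of_exists_gt ⟨1, hs⟩
  exact ge_of_tendsto (hcont.tendsto (ediam s) |>.mono_left nhdsWithin_le_nhds)
    (Filter.eventually_of_mem (Ioo_mem_nhdsGT hs) hle)

lemma ediam_closedBall_five_mul_rpow_le (hd : 0 ≤ d)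
    (h : ∀ (x : X) (r : ℝ), 0 < r → r ≤ 1 → ENNReal.ofReal r ^ d ≤ c * ν (closedBall x r))
    (x : X) {r : ℝ} (hr : 0 < r) (hr1 : r ≤ 1) :
    ediam (closedBall x (5 * r)) ^ d ≤ ↑(10 ^ d * c) * ν (closedBall x r) :=
  calc ediam (closedBall x (5 * r)) ^ d ≤ ENNReal.ofReal (2 * (5 * r)) ^ d :=
        ENNReal.rpow_le_rpow (ediam_closedBall_le_ofReal_two_mul x _) hd
    _ = 10 ^ d * ENNReal.ofReal r ^ d := by
        rw [← mul_assoc, ENNReal.ofReal_mul (by norm_num), ENNReal.mul_rpow_of_nonneg _ _ hd]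
        norm_num
    _ ≤ 10 ^ d * (c * ν (closedBall x r)) := by gcongr; exact h x r hr hr1
    _ = ↑(10 ^ d * c) * ν (closedBall x r) := by
        rw [ENNReal.coe_mul, ENNReal.coe_rpow_of_nonneg _ hd, mul_assoc]; rfl

end PseudoMetricSpace

section HausdorffMeasure

variable {X : Type*} [MetricSpace X] [MeasurableSpace X] [BorelSpace X] {ν : Measure X} {c : ℝ≥0}
  {d : ℝ}

lemma le_smul_hausdorffMeasure_of_measure_closedBall_le (hc : c ≠ 0)
    (h : ∀ (x : X) (r : ℝ), 0 < r → r ≤ 1 → ν (closedBall x r) ≤ c * ENNReal.ofReal r ^ d) :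
    ν ≤ c • (μH[d] : Measure X) :=
  calc ν ≤ Measure.mkMetric fun δ => c * δ ^ d :=
        Measure.le_mkMetric _ ν 2⁻¹ (by simp) fun s hs =>
          measure_le_mul_ediam_rpow_of_measure_closedBall_le h
            (hs.trans_lt ENNReal.one_half_lt_one)
    _ ≤ (c : ℝ≥0∞) • (μH[d] : Measure X) :=
        Measure.mkMetric_mono_smul ENNReal.coe_ne_top (by simpa using hc)
          (.of_forall fun _ => le_rfl)

lemma hausdorffMeasure_le_mul_of_isOpen [SecondCountableTopology X] (hd : 0 ≤ d)
    (h : ∀ (x : X) (r : ℝ), 0 < r → r ≤ 1 → ENNReal.ofReal r ^ d ≤ c * ν (closedBall x r))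
    {U : Set X} (hU : IsOpen U) : μH[d] U ≤ ↑(10 ^ d * c) * ν U := by
  choose u r hu hr hdisj huU hcover using fun N : ℕ =>
    exists_pairwiseDisjoint_closedBall_subset_cover hU (Nat.one_div_pos_of_nat (α := ℝ) (n := N))
  have hr1 : ∀ N x, r N x ≤ 1 := fun N x =>
    (hr N x).2.trans (by simpa using Nat.one_div_le_one_div (α := ℝ) (Nat.zero_le N))
  have : ∀ N, Countable (u N) := fun N => (hu N).to_subtype
  have hscale : Filter.Tendsto (fun N : ℕ => ENNReal.ofReal (2 * (5 * (1 / ((N : ℝ) + 1)))))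
      Filter.atTop (nhds 0) := by
    simpa using ENNReal.tendsto_ofReal
      ((tendsto_one_div_add_atTop_nhds_zero_nat (𝕜 := ℝ)).const_mul 5 |>.const_mul 2)
  have hsum : ∀ N, ∑' x : u N, ediam (closedBall (x : X) (5 * r N x)) ^ d ≤
      ↑(10 ^ d * c) * ν U := fun N =>
    calc ∑' x : u N, ediam (closedBall (x : X) (5 * r N x)) ^ d
        ≤ ∑' x : u N, ↑(10 ^ d * c) * ν (closedBall (x : X) (r N x)) :=
          ENNReal.tsum_le_tsum fun x =>
            ediam_closedBall_five_mul_rpow_le hd h x (hr N x).1 (hr1 N x)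
      _ = ↑(10 ^ d * c) * ν (⋃ x ∈ u N, closedBall x (r N x)) := by
          rw [ENNReal.tsum_mul_left, measure_biUnion (hu N) (hdisj N)
            fun x _ => isClosed_closedBall.measurableSet]
      _ ≤ ↑(10 ^ d * c) * ν U := by gcongr; exact huU N
  refine (Measure.hausdorffMeasure_le_liminf_tsum d U _ hscale
    (fun N (x : u N) => closedBall (x : X) (5 * r N x))
    (.of_forall fun N x => (ediam_closedBall_le_ofReal_two_mul _ _).trans ?_)
    (.of_forall hcover)).trans ?_
  · gcongr
    exact (hr N x).2
  · exact (Filter.liminf_le_liminf (.of_forall hsum)).trans_eq (Filter.liminf_const _)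

lemma hausdorffMeasure_le_smul_of_le_measure_closedBall [SecondCountableTopology X]
    [ν.OuterRegular] (hd : 0 ≤ d)
    (h : ∀ (x : X) (r : ℝ), 0 < r → r ≤ 1 → ENNReal.ofReal r ^ d ≤ c * ν (closedBall x r)) :
    (μH[d] : Measure X) ≤ (10 ^ d * c) • ν :=
  le_of_forall_isOpen_le fun _ hU => hausdorffMeasure_le_mul_of_isOpen hd h hU

end HausdorffMeasure

lemma ofReal_rpow_natCast_sub_one (n : ℕ) {d : ℝ} (hd : 0 < d) :
    ENNReal.ofReal d ^ ((n : ℝ) - 1) = ENNReal.ofReal (d ^ n / d) := by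
  rw [ENNReal.ofReal_rpow_of_pos hd, Real.rpow_sub_one hd.ne', Real.rpow_natCast]

section SphereMeasure

open scoped Pointwise
open Module (finrank)

variable {E : Type*} [NormedAddCommGroup E] [NormedSpace ℝ E]

lemma Ioo_smul_closedBall_subset_iUnion_closedBall (θ : sphere (0 : E) 1) {d : ℝ} (hd : 0 < d) :
    Ioo (0 : ℝ) 1 • ((↑) '' closedBall θ d : Set E) ⊆
      ⋃ j ∈ Finset.range (⌊1 / d⌋₊ + 1), closedBall ((j * d) • (θ : E)) (2 * d) := by
  rintro _ ⟨r, ⟨hr0, hr1⟩, _, ⟨φ, hφ, rfl⟩, rfl⟩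
  refine mem_iUnion₂.2 ⟨⌊r / d⌋₊, ?_, ?_⟩
  · rw [Finset.mem_range, Nat.lt_add_one_iff]
    gcongr
  have hθ : ‖(θ : E)‖ = 1 := norm_eq_of_mem_sphere θ
  have hround : |r - ⌊r / d⌋₊ * d| ≤ d := by
    have hlower := (le_div_iff₀ hd).1 (Nat.floor_le (div_nonneg hr0.le hd.le))
    have hupper := (div_lt_iff₀ hd).1 (Nat.lt_floor_add_one (r / d))
    rw [abs_of_nonneg (by linarith)]
    linarith
  calc dist (r • (φ : E)) ((⌊r / d⌋₊ * d) • (θ : E))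
      ≤ dist (r • (φ : E)) (r • (θ : E)) + dist (r • (θ : E)) ((⌊r / d⌋₊ * d) • (θ : E)) :=
        dist_triangle _ _ _
    _ = r * dist φ θ + |r - ⌊r / d⌋₊ * d| := by
        rw [dist_smul₀, Real.norm_of_nonneg hr0.le, dist_eq_norm (r • (θ : E)), ← sub_smul,
          norm_smul, hθ, mul_one, Real.norm_eq_abs, Subtype.dist_eq]
    _ ≤ 1 * d + d := by gcongr; exact hφ
    _ = 2 * d := by ring

lemma ball_smul_subset_Ioo_smul_closedBall (θ : sphere (0 : E) 1) {d s : ℝ} (hd1 : d ≤ 1)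
    (hs : s ∈ Icc (1 / 2) (3 / 4)) :
    ball (s • (θ : E)) (d / 8) ⊆ Ioo (0 : ℝ) 1 • ((↑) '' closedBall θ d : Set E) := by
  intro y hy
  have hθ : ‖(θ : E)‖ = 1 := norm_eq_of_mem_sphere θ
  have hsθ : ‖s • (θ : E)‖ = s := by
    rw [norm_smul, hθ, mul_one, Real.norm_of_nonneg (by linarith [hs.1])]
  rw [mem_ball, dist_eq_norm] at hy
  have hnorm : |‖y‖ - s| ≤ d / 8 := by
    simpa only [hsθ] using (abs_norm_sub_norm_le y (s • (θ : E))).trans hy.le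
  obtain ⟨hlower, hupper⟩ := abs_le.1 hnorm
  have hy0 : 0 < ‖y‖ := by linarith [hs.1]
  have hclose : ‖y - ‖y‖ • (θ : E)‖ ≤ d / 4 :=
    calc ‖y - ‖y‖ • (θ : E)‖ = ‖(y - s • (θ : E)) + (s - ‖y‖) • (θ : E)‖ := by
          rw [sub_smul, sub_add_sub_cancel]
      _ ≤ ‖y - s • (θ : E)‖ + ‖(s - ‖y‖) • (θ : E)‖ := norm_add_le _ _
      _ ≤ d / 8 + d / 8 := by
          rw [norm_smul, hθ, mul_one, Real.norm_eq_abs, abs_sub_comm]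
          exact add_le_add hy.le hnorm
      _ = d / 4 := by ring
  have hd : 0 ≤ d := by linarith [norm_nonneg (y - ‖y‖ • (θ : E))]
  refine ⟨‖y‖, ⟨hy0, by linarith [hs.2]⟩, ‖y‖⁻¹ • y,
    ⟨⟨‖y‖⁻¹ • y, by simp [norm_smul, hy0.ne']⟩, ?_, rfl⟩, by simp [smul_smul, hy0.ne']⟩
  calc dist (‖y‖⁻¹ • y) (θ : E) = ‖‖y‖⁻¹ • (y - ‖y‖ • (θ : E))‖ := by
        rw [smul_sub, inv_smul_smul₀ hy0.ne', dist_eq_norm]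
    _ = ‖y‖⁻¹ * ‖y - ‖y‖ • (θ : E)‖ := by rw [norm_smul, norm_inv, norm_norm]
    _ ≤ ‖y‖⁻¹ * (‖y‖ * d) := by
        gcongr
        nlinarith [hs.1, hd]
    _ = d := by rw [inv_mul_cancel_left₀ hy0.ne']

lemma pairwiseDisjoint_ball_smul (θ : sphere (0 : E) 1) (a d : ℝ) (s : Set ℕ) :
    s.PairwiseDisjoint fun j : ℕ => ball ((a + j * d) • (θ : E)) (d / 2) := by
  intro i _ j _ hij
  refine ball_disjoint_ball ?_
  have hij1 : (1 : ℝ) ≤ |(i : ℝ) - j| := by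
    exact_mod_cast Int.one_le_abs (sub_ne_zero.2 (Nat.cast_injective.ne hij : (i : ℤ) ≠ j))
  rw [dist_eq_norm, ← sub_smul, norm_smul, norm_eq_of_mem_sphere, mul_one, add_sub_add_left_eq_sub,
    ← sub_mul, norm_mul, Real.norm_eq_abs, Real.norm_eq_abs, add_halves]
  exact (le_abs_self d).trans (le_mul_of_one_le_left (abs_nonneg d) hij1)

variable [FiniteDimensional ℝ E] [MeasurableSpace E] [BorelSpace E]
  (μ : Measure E) [μ.IsAddHaarMeasure]

lemma addHaar_Ioo_smul_closedBall_le (θ : sphere (0 : E) 1) {d : ℝ} (hd : 0 < d) :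
    μ (Ioo (0 : ℝ) 1 • ((↑) '' closedBall θ d : Set E)) ≤
      (⌊1 / d⌋₊ + 1 : ℕ) * (ENNReal.ofReal ((2 * d) ^ finrank ℝ E) * μ (ball 0 1)) :=
  calc μ (Ioo (0 : ℝ) 1 • ((↑) '' closedBall θ d : Set E))
      ≤ ∑ j ∈ Finset.range (⌊1 / d⌋₊ + 1), μ (closedBall (((j : ℝ) * d) • (θ : E)) (2 * d)) :=
        (measure_mono (Ioo_smul_closedBall_subset_iUnion_closedBall θ hd)).trans
          (measure_biUnion_finset_le _ _)
    _ = _ := by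
        simp_rw [Measure.addHaar_closedBall μ _ (mul_nonneg zero_le_two hd.le)]
        rw [Finset.sum_const, Finset.card_range, nsmul_eq_mul]

lemma toSphere_closedBall_le (θ : sphere (0 : E) 1) {d : ℝ} (hd : 0 < d) (hd1 : d ≤ 1) :
    μ.toSphere (closedBall θ d) ≤
      finrank ℝ E * 2 ^ (finrank ℝ E + 1) * μ (ball 0 1) *
        ENNReal.ofReal d ^ ((finrank ℝ E : ℝ) - 1) := by
  set n := finrank ℝ E with hn
  set N := ⌊1 / d⌋₊ + 1 with hN
  have hcount : (N : ℝ) ≤ 2 / d := by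
    have h1d : 1 ≤ 1 / d := one_le_one_div hd hd1
    have hfloor := Nat.floor_le (zero_le_one.trans h1d)
    push_cast [hN]
    linarith [show 2 / d = 1 / d + 1 / d by ring]
  calc μ.toSphere (closedBall θ d)
      ≤ n * (ENNReal.ofReal (2 / d) * (ENNReal.ofReal ((2 * d) ^ n) * μ (ball 0 1))) := by
        rw [μ.toSphere_apply' isClosed_closedBall.measurableSet, ← hn]
        gcongr
        refine (addHaar_Ioo_smul_closedBall_le μ θ hd).trans ?_
        gcongr
        rw [← ENNReal.ofReal_natCast]
        exact ENNReal.ofReal_le_ofReal hcount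
    _ = n * (ENNReal.ofReal (2 ^ (n + 1) * (d ^ n / d)) * μ (ball 0 1)) := by
        rw [← mul_assoc (ENNReal.ofReal _), ← ENNReal.ofReal_mul (by positivity), mul_pow, pow_succ]
        ring_nf
    _ = _ := by
        rw [ENNReal.ofReal_mul (by positivity), ENNReal.ofReal_pow zero_le_two,
          ENNReal.ofReal_ofNat, ofReal_rpow_natCast_sub_one n hd]
        ring

lemma le_addHaar_Ioo_smul_closedBall (θ : sphere (0 : E) 1) {d : ℝ} (hd : 0 < d) (hd1 : d ≤ 1) :
    (⌊1 / d⌋₊ + 1 : ℕ) * (ENNReal.ofReal ((d / 8) ^ finrank ℝ E) * μ (ball 0 1)) ≤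
      μ (Ioo (0 : ℝ) 1 • ((↑) '' closedBall θ d : Set E)) := by
  set N := ⌊1 / d⌋₊ + 1
  have hmem : ∀ j ∈ Finset.range N, 1 / 2 + j * (d / 4) ∈ Icc (1 / 2 : ℝ) (3 / 4) := by
    intro j hj
    have hj0 : 0 ≤ j * (d / 4) := by positivity
    have hj1 : (j : ℝ) * d ≤ 1 :=
      (le_div_iff₀ hd).1 <| (Nat.cast_le.2 (Finset.mem_range_succ_iff.1 hj)).trans
        (Nat.floor_le (one_div_nonneg.2 hd.le))
    constructor <;> linarith
  calc N * (ENNReal.ofReal ((d / 8) ^ finrank ℝ E) * μ (ball 0 1))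
      = ∑ j ∈ Finset.range N, μ (ball ((1 / 2 + j * (d / 4)) • (θ : E)) (d / 8)) := by
        simp_rw [Measure.addHaar_ball_of_pos μ _ (div_pos hd (by norm_num : (0 : ℝ) < 8))]
        rw [Finset.sum_const, Finset.card_range, nsmul_eq_mul]
    _ = μ (⋃ j ∈ Finset.range N, ball ((1 / 2 + j * (d / 4)) • (θ : E)) (d / 8)) := by
        refine (measure_biUnion_finset ?_ fun _ _ => measurableSet_ball).symm
        simpa only [show d / 4 / 2 = d / 8 by ring] using
          pairwiseDisjoint_ball_smul θ (1 / 2) (d / 4) (Finset.range N)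
    _ ≤ μ (Ioo (0 : ℝ) 1 • ((↑) '' closedBall θ d : Set E)) :=
        measure_mono (iUnion₂_subset fun j hj =>
          ball_smul_subset_Ioo_smul_closedBall θ hd1 (hmem j hj))

lemma ofReal_rpow_le_toSphere_closedBall (θ : sphere (0 : E) 1) {d : ℝ} (hd : 0 < d)
    (hd1 : d ≤ 1) :
    finrank ℝ E * 8⁻¹ ^ finrank ℝ E * μ (ball 0 1) *
        ENNReal.ofReal d ^ ((finrank ℝ E : ℝ) - 1) ≤
      μ.toSphere (closedBall θ d) := by
  set n := finrank ℝ E with hn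
  set N := ⌊1 / d⌋₊ + 1 with hN
  have hcount : 1 / d ≤ (N : ℝ) := by
    push_cast [hN]
    exact (Nat.lt_floor_add_one _).le
  calc n * 8⁻¹ ^ n * μ (ball 0 1) * ENNReal.ofReal d ^ ((n : ℝ) - 1)
      = n * (ENNReal.ofReal (8⁻¹ ^ n * (d ^ n / d)) * μ (ball 0 1)) := by
        rw [ENNReal.ofReal_mul (by positivity), ENNReal.ofReal_pow (by norm_num),
          ENNReal.ofReal_inv_of_pos (by norm_num), ENNReal.ofReal_ofNat,
          ofReal_rpow_natCast_sub_one n hd]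
        ring
    _ = n * (ENNReal.ofReal (1 / d) * (ENNReal.ofReal ((d / 8) ^ n) * μ (ball 0 1))) := by
        rw [← mul_assoc (ENNReal.ofReal _), ← ENNReal.ofReal_mul (by positivity), div_pow, inv_pow]
        ring_nf
    _ ≤ μ.toSphere (closedBall θ d) := by
        rw [μ.toSphere_apply' isClosed_closedBall.measurableSet, ← hn]
        gcongr
        refine le_trans ?_ (le_addHaar_Ioo_smul_closedBall μ θ hd hd1)
        gcongr
        rw [← ENNReal.ofReal_natCast]
        exact ENNReal.ofReal_le_ofReal hcount

variable [Nontrivial E]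

lemma exists_toSphere_le_smul_hausdorffMeasure :
    ∃ C : ℝ≥0, μ.toSphere ≤ C • (μH[(finrank ℝ E : ℝ) - 1] : Measure (sphere (0 : E) 1)) := by
  have hball : μ (ball (0 : E) 1) ≠ ∞ := measure_ball_lt_top.ne
  lift μ (ball (0 : E) 1) to ℝ≥0 using hball with V hV
  have hV0 : V ≠ 0 := by
    rw [← ENNReal.coe_ne_zero, hV]
    exact (measure_ball_pos μ 0 one_pos).ne'
  refine ⟨finrank ℝ E * 2 ^ (finrank ℝ E + 1) * V,
    le_smul_hausdorffMeasure_of_measure_closedBall_le ?_ fun θ d hd hd1 => ?_⟩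
  · have : (finrank ℝ E : ℝ≥0) ≠ 0 := Nat.cast_ne_zero.2 Module.finrank_pos.ne'
    positivity
  · push_cast
    rw [hV]
    exact toSphere_closedBall_le μ θ hd hd1

lemma exists_hausdorffMeasure_le_smul_toSphere :
    ∃ C : ℝ≥0, (μH[(finrank ℝ E : ℝ) - 1] : Measure (sphere (0 : E) 1)) ≤ C • μ.toSphere := by
  have hdim : (1 : ℝ) ≤ finrank ℝ E := by exact_mod_cast Module.finrank_pos (R := ℝ) (M := E)
  set b : ℝ≥0∞ := finrank ℝ E * 8⁻¹ ^ finrank ℝ E * μ (ball 0 1)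
  have hb0 : b ≠ 0 :=
    mul_ne_zero (mul_ne_zero (Nat.cast_ne_zero.2 Module.finrank_pos.ne') (by simp))
      (measure_ball_pos μ 0 one_pos).ne'
  have hbtop : b ≠ ∞ := by finiteness
  refine ⟨_, hausdorffMeasure_le_smul_of_le_measure_closedBall (c := b.toNNReal⁻¹)
    (sub_nonneg.2 hdim) fun θ d hd hd1 => ?_⟩
  rw [ENNReal.coe_inv (ENNReal.toNNReal_ne_zero.2 ⟨hb0, hbtop⟩), ENNReal.coe_toNNReal hbtop,
    mul_comm, ← div_eq_mul_inv, ENNReal.le_div_iff_mul_le (.inl hb0) (.inl hbtop), mul_comm]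
  exact ofReal_rpow_le_toSphere_closedBall μ θ hd hd1

instance isFiniteMeasure_hausdorffMeasure_sphere :
    IsFiniteMeasure (μH[(finrank ℝ E : ℝ) - 1] : Measure (sphere (0 : E) 1)) := by
  obtain ⟨C, hC⟩ := exists_hausdorffMeasure_le_smul_toSphere (Measure.addHaar : Measure E)
  exact isFiniteMeasure_of_le _ hC

lemma lintegral_eq_lintegral_Ioi_lintegral_toSphere {G : E → ℝ≥0∞} (hG : Measurable G) :
    ∫⁻ y, G y ∂μ = ∫⁻ r in Ioi (0 : ℝ), ENNReal.ofReal (r ^ (finrank ℝ E - 1)) *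
      ∫⁻ θ : sphere (0 : E) 1, G (r • (θ : E)) ∂μ.toSphere := by
  have hG' : Measurable fun p : sphere (0 : E) 1 × Ioi (0 : ℝ) => G ((p.2 : ℝ) • (p.1 : E)) :=
    hG.comp (by fun_prop)
  calc ∫⁻ y, G y ∂μ = ∫⁻ y : ({0}ᶜ : Set E), G y ∂μ.comap (↑) := by
        rw [lintegral_subtype_comap (measurableSet_singleton _).compl, restrict_compl_singleton]
    _ = ∫⁻ y : ({0}ᶜ : Set E), (fun p : sphere (0 : E) 1 × Ioi (0 : ℝ) => G ((p.2 : ℝ) • (p.1 : E)))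
          (homeomorphUnitSphereProd E y) ∂μ.comap (↑) := by
        refine lintegral_congr fun y => ?_
        simp [smul_smul, norm_ne_zero_iff.2 y.2]
    _ = ∫⁻ p, G ((p.2 : ℝ) • (p.1 : E))
          ∂μ.toSphere.prod (Measure.volumeIoiPow (finrank ℝ E - 1)) :=
        μ.measurePreserving_homeomorphUnitSphereProd.lintegral_comp hG'
    _ = ∫⁻ r : Ioi (0 : ℝ), ∫⁻ θ : sphere (0 : E) 1, G ((r : ℝ) • (θ : E)) ∂μ.toSphere
          ∂Measure.volumeIoiPow (finrank ℝ E - 1) :=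
        lintegral_prod_symm _ hG'.aemeasurable
    _ = ∫⁻ r : Ioi (0 : ℝ), ENNReal.ofReal ((r : ℝ) ^ (finrank ℝ E - 1)) *
          ∫⁻ θ : sphere (0 : E) 1, G ((r : ℝ) • (θ : E)) ∂μ.toSphere ∂volume.comap Subtype.val := by
        rw [Measure.volumeIoiPow, lintegral_withDensity_eq_lintegral_mul _ (by fun_prop)
          hG'.lintegral_prod_left']
        rfl
    _ = _ := lintegral_subtype_comap measurableSet_Ioi fun r : ℝ =>
        ENNReal.ofReal (r ^ (finrank ℝ E - 1)) *
          ∫⁻ θ : sphere (0 : E) 1, G (r • (θ : E)) ∂μ.toSphere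

end SphereMeasure

section Averages

open Module (finrank)

lemma map_sub_smul_addHaar {E : Type*} [NormedAddCommGroup E] [NormedSpace ℝ E]
    [FiniteDimensional ℝ E] [MeasurableSpace E] [BorelSpace E] (μ : Measure E)
    [μ.IsAddHaarMeasure] (x : E) {t : ℝ} (ht : t ≠ 0) :
    μ.map (fun y => x - t • y) = ENNReal.ofReal |(t ^ finrank ℝ E)⁻¹| • μ := by
  rw [show (fun y => x - t • y) = (x - ·) ∘ (t • ·) from rfl,
    ← Measure.map_map (by fun_prop) (by fun_prop), Measure.map_addHaar_smul μ ht,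
    Measure.map_smul, Measure.map_sub_left_eq_self]

variable {n : ℕ} {f g : Rn n → ℝ} (x : Rn n)

lemma setLIntegral_ball_le_volume_mul_HLMax {r : ℝ} (hr : 0 < r) :
    ∫⁻ y in ball x r, ENNReal.ofReal |f y| ≤ volume (ball x r) * HLMax n f x := by
  rw [mul_comm, ← ENNReal.div_le_iff (measure_ball_pos _ _ hr).ne' measure_ball_lt_top.ne]
  exact le_iSup₂_of_le (f := fun r (_ : r ∈ Ioi (0 : ℝ)) =>
    (∫⁻ y in ball x r, ENNReal.ofReal |f y|) / volume (ball x r)) r hr le_rfl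

lemma setLIntegral_ball_zero_le_HLMax (hf : Measurable f) {t R : ℝ} (ht : 0 < t) (hR : 0 < R) :
    ∫⁻ y in ball 0 R, ENNReal.ofReal (f (x - t • y)) ≤
      ENNReal.ofReal (R ^ n) * volume (ball (0 : Rn n) 1) * HLMax n f x := by
  have hpreimage : (fun y : Rn n => x - t • y) ⁻¹' ball x (t * R) = ball 0 R := by
    ext y
    rw [mem_preimage, mem_ball_zero_iff, mem_ball, dist_eq_norm, sub_sub_cancel_left, norm_neg,
      norm_smul, Real.norm_of_nonneg ht.le, mul_lt_mul_iff_right₀ ht]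
  calc ∫⁻ y in ball 0 R, ENNReal.ofReal (f (x - t • y))
      = ENNReal.ofReal (t ^ n)⁻¹ * ∫⁻ z in ball x (t * R), ENNReal.ofReal (f z) := by
        rw [← hpreimage, ← setLIntegral_map measurableSet_ball hf.ennreal_ofReal (by fun_prop),
          map_sub_smul_addHaar _ x ht.ne', Measure.restrict_smul, lintegral_smul_measure,
          finrank_euclideanSpace_fin, abs_of_pos (by positivity), smul_eq_mul]
    _ ≤ ENNReal.ofReal (t ^ n)⁻¹ * (volume (ball x (t * R)) * HLMax n f x) := by
        gcongr
        refine le_trans ?_ (setLIntegral_ball_le_volume_mul_HLMax x (by positivity))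
        gcongr
        exact le_abs_self _
    _ = ENNReal.ofReal (R ^ n) * volume (ball (0 : Rn n) 1) * HLMax n f x := by
        rw [Measure.addHaar_ball_of_pos _ _ (by positivity), finrank_euclideanSpace_fin,
          ← mul_assoc, ← mul_assoc, ← ENNReal.ofReal_mul (by positivity), mul_pow,
          inv_mul_cancel_left₀ (by positivity)]

lemma sphAvgE_le_sphMax {t : ℝ} (ht : 0 < t) : sphAvgE n g x t ≤ sphMax n g x :=
  le_iSup₂_of_le (f := fun t (_ : t ∈ Ioi (0 : ℝ)) => sphAvgE n g x t) t ht le_rfl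

variable [NeZero n]

lemma sphAvgE_eq_lintegral_sphere (t : ℝ) :
    sphAvgE n g x t = ∫⁻ θ : sphere (0 : Rn n) 1, ENNReal.ofReal (g (x - t • (θ : Rn n)))
      ∂μH[(finrank ℝ (Rn n) : ℝ) - 1] := by
  have hn : (0 : ℝ) ≤ (n : ℝ) - 1 := sub_nonneg.2 (Nat.one_le_cast.2 NeZero.one_le)
  have hmap := (isometry_subtype_coe (s := sphere (0 : Rn n) 1)).map_hausdorffMeasure (.inl hn)
  rw [Subtype.range_coe] at hmap
  rw [sphAvgE, μSph, ← hmap, finrank_euclideanSpace_fin,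
    (MeasurableEmbedding.subtype_coe isClosed_sphere.measurableSet).lintegral_map]

lemma measurable_sphAvgE (hg : Measurable g) : Measurable (sphAvgE n g x) := by
  have hjoint : Measurable fun p : ℝ × sphere (0 : Rn n) 1 =>
      ENNReal.ofReal (g (x - p.1 • (p.2 : Rn n))) :=
    (hg.comp (by fun_prop)).ennreal_ofReal
  simpa only [← sphAvgE_eq_lintegral_sphere] using
    hjoint.lintegral_prod_right' (ν := μH[(finrank ℝ (Rn n) : ℝ) - 1])

variable (n) in
lemma exists_lintegral_toSphere_le_sphAvgE : ∃ C : ℝ≥0, ∀ (g : Rn n → ℝ) (x : Rn n) (t : ℝ),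
    ∫⁻ θ : sphere (0 : Rn n) 1, ENNReal.ofReal (g (x - t • (θ : Rn n)))
      ∂(volume : Measure (Rn n)).toSphere ≤ C * sphAvgE n g x t := by
  obtain ⟨C, hC⟩ := exists_toSphere_le_smul_hausdorffMeasure (volume : Measure (Rn n))
  refine ⟨C, fun g x t => (lintegral_mono' hC le_rfl).trans_eq ?_⟩
  rw [sphAvgE_eq_lintegral_sphere, lintegral_smul_measure, ENNReal.smul_def, smul_eq_mul]

variable (n) in
lemma exists_sphAvgE_le_lintegral_toSphere : ∃ C : ℝ≥0, ∀ (g : Rn n → ℝ) (x : Rn n) (t : ℝ),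
    sphAvgE n g x t ≤ C * ∫⁻ θ : sphere (0 : Rn n) 1, ENNReal.ofReal (g (x - t • (θ : Rn n)))
      ∂(volume : Measure (Rn n)).toSphere := by
  obtain ⟨C, hC⟩ := exists_hausdorffMeasure_le_smul_toSphere (volume : Measure (Rn n))
  refine ⟨C, fun g x t => ?_⟩
  rw [sphAvgE_eq_lintegral_sphere]
  refine (lintegral_mono' hC le_rfl).trans_eq ?_
  rw [lintegral_smul_measure, ENNReal.smul_def, smul_eq_mul]

variable (n) in
lemma exists_lintegral_mul_comp_norm_le_sphMax :
    ∃ C : ℝ≥0, ∀ (f : Rn n → ℝ) (K : ℝ → ℝ≥0∞), Measurable f → Measurable K →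
      ∀ (x : Rn n) (t : ℝ), 0 < t →
        ∫⁻ y, ENNReal.ofReal (f (x - t • y)) * K ‖y‖ ≤
          C * sphMax n f x * ∫⁻ r in Ioi (0 : ℝ), ENNReal.ofReal (r ^ (n - 1)) * K r := by
  obtain ⟨C, hC⟩ := exists_lintegral_toSphere_le_sphAvgE n
  refine ⟨C, fun f K hf hK x t ht => ?_⟩
  have hfm : ∀ s : ℝ, Measurable fun y : Rn n => ENNReal.ofReal (f (x - s • y)) := fun s =>
    (hf.comp (by fun_prop)).ennreal_ofReal
  have hsphere : ∀ r ∈ Ioi (0 : ℝ), ∫⁻ θ : sphere (0 : Rn n) 1,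
      ENNReal.ofReal (f (x - t • r • (θ : Rn n))) * K ‖r • (θ : Rn n)‖
        ∂(volume : Measure (Rn n)).toSphere ≤ C * sphMax n f x * K r := fun r hr =>
    calc _ = (∫⁻ θ : sphere (0 : Rn n) 1, ENNReal.ofReal (f (x - (t * r) • (θ : Rn n)))
            ∂(volume : Measure (Rn n)).toSphere) * K r := by
          simp_rw [norm_smul, norm_eq_of_mem_sphere, mul_one, Real.norm_of_nonneg hr.out.le,
            smul_smul]
          exact lintegral_mul_const _ ((hfm (t * r)).comp measurable_subtype_coe)
      _ ≤ C * sphMax n f x * K r := by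
          gcongr
          refine (hC f x (t * r)).trans ?_
          gcongr
          exact sphAvgE_le_sphMax x (mul_pos ht hr)
  calc ∫⁻ y, ENNReal.ofReal (f (x - t • y)) * K ‖y‖
      ≤ ∫⁻ r in Ioi (0 : ℝ), ENNReal.ofReal (r ^ (n - 1)) * (C * sphMax n f x * K r) := by
        have hFm : Measurable fun y : Rn n => ENNReal.ofReal (f (x - t • y)) * K ‖y‖ :=
          (hfm t).mul (hK.comp measurable_norm)
        rw [lintegral_eq_lintegral_Ioi_lintegral_toSphere volume hFm, finrank_euclideanSpace_fin]
        exact setLIntegral_mono' measurableSet_Ioi fun r hr => by gcongr; exact hsphere r hr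
    _ = C * sphMax n f x * ∫⁻ r in Ioi (0 : ℝ), ENNReal.ofReal (r ^ (n - 1)) * K r := by
        simp_rw [mul_left_comm (ENNReal.ofReal _)]
        exact lintegral_const_mul _ (by fun_prop)

variable (n) in
lemma exists_setLIntegral_preimage_norm_le_sphMax :
    ∃ C : ℝ≥0, ∀ (f : Rn n → ℝ) (K : ℝ → ℝ≥0∞), Measurable f → Measurable K →
      ∀ J : Set ℝ, MeasurableSet J → ∀ (x : Rn n) (t : ℝ), 0 < t →
        ∫⁻ y in norm ⁻¹' J, ENNReal.ofReal (f (x - t • y)) * K ‖y‖ ≤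
          C * sphMax n f x * ∫⁻ r in J ∩ Ioi 0, ENNReal.ofReal (r ^ (n - 1)) * K r := by
  obtain ⟨C, hC⟩ := exists_lintegral_mul_comp_norm_le_sphMax n
  refine ⟨C, fun f K hf hK J hJ x t ht => ?_⟩
  have h := hC f (J.indicator K) hf (hK.indicator hJ) x t ht
  rw [← setLIntegral_indicator hJ, ← lintegral_indicator (hJ.preimage measurable_norm)]
  simp_rw [indicator_mul_right]
  exact h

variable (n) in
lemma exists_lintegral_Ioc_sphAvgE_le_setLIntegral_ball :
    ∃ C : ℝ≥0, ∀ g : Rn n → ℝ, Measurable g → ∀ (x : Rn n) (t S : ℝ),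
      ∫⁻ s in Ioc 0 S, ENNReal.ofReal (s ^ (n - 1)) * sphAvgE n g x (t * s) ≤
        C * ∫⁻ y in ball 0 S, ENNReal.ofReal (g (x - t • y)) := by
  obtain ⟨C, hC⟩ := exists_sphAvgE_le_lintegral_toSphere n
  refine ⟨C, fun g hg x t S => ?_⟩
  set G : Rn n → ℝ≥0∞ := (ball 0 S).indicator fun y => ENNReal.ofReal (g (x - t • y)) with hG
  have hGm : Measurable G :=
    (hg.comp (by fun_prop)).ennreal_ofReal.indicator measurableSet_ball
  have hsphere : ∀ s ∈ Ioo 0 S, sphAvgE n g x (t * s) ≤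
      C * ∫⁻ θ : sphere (0 : Rn n) 1, G (s • (θ : Rn n)) ∂(volume : Measure (Rn n)).toSphere := by
    intro s hs
    refine (hC g x (t * s)).trans_eq ?_
    congr 1
    refine lintegral_congr fun θ => ?_
    rw [hG, indicator_of_mem, smul_smul]
    rw [mem_ball_zero_iff, norm_smul, norm_eq_of_mem_sphere, mul_one, Real.norm_of_nonneg hs.1.le]
    exact hs.2
  calc ∫⁻ s in Ioc 0 S, ENNReal.ofReal (s ^ (n - 1)) * sphAvgE n g x (t * s)
      = ∫⁻ s in Ioo 0 S, ENNReal.ofReal (s ^ (n - 1)) * sphAvgE n g x (t * s) :=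
        setLIntegral_congr Ioo_ae_eq_Ioc.symm
    _ ≤ ∫⁻ s in Ioo 0 S, C * (ENNReal.ofReal (s ^ (n - 1)) *
          ∫⁻ θ : sphere (0 : Rn n) 1, G (s • (θ : Rn n)) ∂(volume : Measure (Rn n)).toSphere) := by
        refine setLIntegral_mono' measurableSet_Ioo fun s hs => ?_
        rw [mul_left_comm]
        gcongr
        exact hsphere s hs
    _ ≤ ∫⁻ s in Ioi 0, C * (ENNReal.ofReal (s ^ (n - 1)) *
          ∫⁻ θ : sphere (0 : Rn n) 1, G (s • (θ : Rn n)) ∂(volume : Measure (Rn n)).toSphere) :=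
        lintegral_mono_set Ioo_subset_Ioi_self
    _ = C * ∫⁻ y in ball 0 S, ENNReal.ofReal (g (x - t • y)) := by
        rw [lintegral_const_mul' _ _ ENNReal.coe_ne_top, ← lintegral_indicator measurableSet_ball,
          lintegral_eq_lintegral_Ioi_lintegral_toSphere volume hGm, finrank_euclideanSpace_fin]

variable (n) in
lemma exists_lintegral_Ioc_sphAvgE_le_HLMax :
    ∃ C : ℝ≥0, ∀ g : Rn n → ℝ, Measurable g → ∀ (x : Rn n) (t S : ℝ), 0 < t → 0 < S →
      ∫⁻ s in Ioc 0 S, ENNReal.ofReal (s ^ (n - 1)) * sphAvgE n g x (t * s) ≤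
        C * ENNReal.ofReal (S ^ n) * HLMax n g x := by
  obtain ⟨C, hC⟩ := exists_lintegral_Ioc_sphAvgE_le_setLIntegral_ball n
  refine ⟨C * (volume (ball (0 : Rn n) 1)).toNNReal, fun g hg x t S ht hS => ?_⟩
  calc _ ≤ C * ∫⁻ y in ball 0 S, ENNReal.ofReal (g (x - t • y)) := hC g hg x t S
    _ ≤ C * (ENNReal.ofReal (S ^ n) * volume (ball (0 : Rn n) 1) * HLMax n g x) := by
        gcongr
        exact setLIntegral_ball_zero_le_HLMax x hg ht hS
    _ = _ := by
        rw [ENNReal.coe_mul, ENNReal.coe_toNNReal measure_ball_lt_top.ne]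
        ring

end Averages

section RadialWeight

/-- The radial profile `r ↦ (1 - r ^ a₁) ^ (1 / a₂)` of the weight `omegaW a₁ a₂`, that is
`omegaW a₁ a₂ y = radialWeight a₁ a₂ ‖y‖`. It is the substitution that turns the `y`-integral into
an integral over the radii of the spherical averages of `g`. -/
def radialWeight (a₁ a₂ r : ℝ) : ℝ := (1 - r ^ a₁) ^ (1 / a₂)

variable {a₁ a₂ r : ℝ}

lemma measurable_radialWeight : Measurable (radialWeight a₁ a₂) := by
  unfold radialWeight
  fun_prop

lemma lt_one_of_one_sub_rpow_pos (ha₁ : 0 ≤ a₁) (hr : 0 < 1 - r ^ a₁) : r < 1 := by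
  by_contra! h
  linarith [Real.one_le_rpow h ha₁]

lemma radialWeight_rpow (hr : 0 < 1 - r ^ a₁) (p : ℝ) :
    radialWeight a₁ a₂ r ^ p = (1 - r ^ a₁) ^ (p / a₂) := by
  rw [radialWeight, ← Real.rpow_mul hr.le, one_div_mul_eq_div]

lemma hasDerivAt_radialWeight (ha₂ : a₂ ≠ 0) (hr0 : 0 < r) (hr : 0 < 1 - r ^ a₁) :
    HasDerivAt (radialWeight a₁ a₂)
      (-(a₁ / a₂ * r ^ (a₁ - 1) * radialWeight a₁ a₂ r ^ (1 - a₂))) r := by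
  have hchain := ((Real.hasDerivAt_rpow_const (p := a₁) (.inl hr0.ne')).const_sub 1).rpow_const
    (p := 1 / a₂) (.inl hr.ne')
  refine HasDerivAt.congr_deriv hchain ?_
  rw [radialWeight_rpow hr, sub_div, div_self ha₂]
  ring

lemma injOn_radialWeight (ha₁ : a₁ ≠ 0) (ha₂ : a₂ ≠ 0) :
    InjOn (radialWeight a₁ a₂) {r | 0 < r ∧ 0 < 1 - r ^ a₁} := by
  rintro r ⟨hr0, hr⟩ s ⟨hs0, hs⟩ hrs
  have hpow := (Real.rpow_left_inj hr.le hs.le (one_div_ne_zero ha₂)).1 hrs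
  exact (Real.rpow_left_inj hr0.le hs0.le ha₁).1 (sub_right_injective hpow)

lemma pow_mul_radialWeight_rpow_le {n : ℕ} (hn : n ≠ 0) (ha₁ : 0 < a₁) (ha₁n : a₁ ≤ n)
    (ha₂ : a₂ ≠ 0) (hr0 : 0 < r) (hr : 0 < 1 - r ^ a₁) :
    r ^ (n - 1) * radialWeight a₁ a₂ r ^ (n - a₂) ≤
      a₂ / a₁ * (a₁ / a₂ * r ^ (a₁ - 1) * radialWeight a₁ a₂ r ^ (1 - a₂) *
        radialWeight a₁ a₂ r ^ (n - 1)) := by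
  have hω : 0 < radialWeight a₁ a₂ r := Real.rpow_pos_of_pos hr _
  have hcast : ((n - 1 : ℕ) : ℝ) = n - 1 := Nat.cast_pred (Nat.pos_of_ne_zero hn)
  have hr_pow : r ^ (n - 1) ≤ r ^ (a₁ - 1) := by
    rw [← Real.rpow_natCast, hcast]
    exact Real.rpow_le_rpow_of_exponent_ge hr0 (lt_one_of_one_sub_rpow_pos ha₁.le hr).le
      (sub_le_sub_right ha₁n 1)
  have hω_pow : radialWeight a₁ a₂ r ^ (n - a₂) =
      radialWeight a₁ a₂ r ^ (1 - a₂) * radialWeight a₁ a₂ r ^ (n - 1) := by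
    rw [← Real.rpow_natCast, ← Real.rpow_add hω, hcast]
    ring_nf
  calc r ^ (n - 1) * radialWeight a₁ a₂ r ^ (n - a₂)
      ≤ r ^ (a₁ - 1) * (radialWeight a₁ a₂ r ^ (1 - a₂) * radialWeight a₁ a₂ r ^ (n - 1)) := by
        rw [hω_pow]
        gcongr
    _ = _ := by field_simp

lemma setLIntegral_pow_mul_comp_radialWeight_le {n : ℕ} (hn : n ≠ 0) (ha₁ : 0 < a₁)
    (ha₁n : a₁ ≤ n) (ha₂ : 0 < a₂) {b : ℝ} {J : Set ℝ} (hJ : MeasurableSet J)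
    (hJpos : J ⊆ {r | 0 < r ∧ 0 < 1 - r ^ a₁}) (hJb : ∀ r ∈ J, 1 - r ^ a₁ ≤ b) (h : ℝ → ℝ≥0∞) :
    ∫⁻ r in J, ENNReal.ofReal (r ^ (n - 1)) *
        (ENNReal.ofReal (radialWeight a₁ a₂ r ^ (n - a₂)) * h (radialWeight a₁ a₂ r)) ≤
      ENNReal.ofReal (a₂ / a₁) *
        ∫⁻ s in Ioc 0 (b ^ (1 / a₂)), ENNReal.ofReal (s ^ (n - 1)) * h s := by
  set ω := radialWeight a₁ a₂
  set ω' : ℝ → ℝ := fun r => -(a₁ / a₂ * r ^ (a₁ - 1) * ω r ^ (1 - a₂))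
  have hω : ∀ r ∈ J, 0 < ω r := fun r hr => Real.rpow_pos_of_pos (hJpos hr).2 _
  have hderiv : ∀ r ∈ J, HasDerivWithinAt ω (ω' r) J r := fun r hr =>
    (hasDerivAt_radialWeight ha₂.ne' (hJpos hr).1 (hJpos hr).2).hasDerivWithinAt
  have hinj : InjOn ω J := (injOn_radialWeight ha₁.ne' ha₂.ne').mono hJpos
  have himage : ω '' J ⊆ Ioc 0 (b ^ (1 / a₂)) := by
    rintro _ ⟨r, hr, rfl⟩
    exact ⟨hω r hr, Real.rpow_le_rpow (hJpos hr).2.le (hJb r hr) (by positivity)⟩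
  have hjacobian : ∀ r ∈ J, ENNReal.ofReal (r ^ (n - 1)) * ENNReal.ofReal (ω r ^ (n - a₂)) ≤
      ENNReal.ofReal (a₂ / a₁) * (ENNReal.ofReal |ω' r| * ENNReal.ofReal (ω r ^ (n - 1))) := by
    intro r hr
    have hr0 := (hJpos hr).1
    have hωr := hω r hr
    rw [← ENNReal.ofReal_mul (by positivity), ← ENNReal.ofReal_mul (abs_nonneg _),
      ← ENNReal.ofReal_mul (by positivity), abs_neg, abs_of_pos (by positivity)]
    exact ENNReal.ofReal_le_ofReal
      (pow_mul_radialWeight_rpow_le hn ha₁ ha₁n ha₂.ne' hr0 (hJpos hr).2)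
  calc _ ≤ ∫⁻ r in J, ENNReal.ofReal (a₂ / a₁) *
          (ENNReal.ofReal |ω' r| * (ENNReal.ofReal (ω r ^ (n - 1)) * h (ω r))) := by
        refine setLIntegral_mono' hJ fun r hr => ?_
        simpa only [mul_assoc] using mul_le_mul_left (hjacobian r hr) (h (ω r))
    _ = ENNReal.ofReal (a₂ / a₁) * ∫⁻ s in ω '' J, ENNReal.ofReal (s ^ (n - 1)) * h s := by
        rw [lintegral_const_mul' _ _ ENNReal.ofReal_ne_top,
          lintegral_image_eq_lintegral_abs_deriv_mul hJ hderiv hinj]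
    _ ≤ _ := by gcongr

end RadialWeight

section DyadicBounds

variable {n : ℕ} {a₁ a₂ : ℝ}

lemma rpow_le_rpow_abs_mul_rpow {u v c : ℝ} (hv : 0 < v) (hvu : v ≤ u) (huc : u ≤ c * v) (p : ℝ) :
    u ^ p ≤ c ^ |p| * v ^ p := by
  have hone : 1 ≤ u / v := (one_le_div hv).2 hvu
  calc u ^ p = (u / v) ^ p * v ^ p := by
        rw [← Real.mul_rpow (by positivity) hv.le, div_mul_cancel₀ _ hv.ne']
    _ ≤ (u / v) ^ |p| * v ^ p := by
        gcongr
        exact le_abs_self p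
    _ ≤ c ^ |p| * v ^ p := by
        gcongr
        exact (div_le_iff₀ hv).2 huc

lemma radialWeight_rpow_le_of_dyadic {r p k : ℝ} (hlower : 2 ^ (-k) ≤ 1 - r ^ a₁)
    (hupper : 1 - r ^ a₁ ≤ 2 ^ (1 - k)) :
    radialWeight a₁ a₂ r ^ p ≤ 2 ^ |p / a₂| * 2 ^ (-k * p / a₂) := by
  have h2k : (0 : ℝ) < 2 ^ (-k) := by positivity
  have hdouble : (2 : ℝ) ^ (1 - k) = 2 * 2 ^ (-k) := by
    rw [sub_eq_add_neg, Real.rpow_add two_pos, Real.rpow_one]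
  rw [radialWeight_rpow (h2k.trans_le hlower), mul_div_assoc, Real.rpow_mul zero_le_two]
  exact rpow_le_rpow_abs_mul_rpow h2k hlower (hupper.trans_eq hdouble) _

lemma two_rpow_one_sub_rpow_one_div_pow (k a : ℝ) (n : ℕ) :
    (((2 : ℝ) ^ (1 - k)) ^ (1 / a)) ^ n = 2 ^ (n / a) * 2 ^ (-k * n / a) := by
  rw [← Real.rpow_natCast, ← Real.rpow_mul (by positivity), ← Real.rpow_mul zero_le_two,
    ← Real.rpow_add two_pos]
  ring_nf

lemma measurableSet_le_one_sub_rpow (a b c : ℝ) :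
    MeasurableSet {r : ℝ | b ≤ 1 - r ^ a ∧ 1 - r ^ a ≤ c} :=
  measurableSet_Icc.preimage (by fun_prop : Measurable fun r : ℝ => 1 - r ^ a)

variable (n a₂) in
lemma exists_dyadicMax_le_HLMax_mul_sphMax (ha₁ : 0 ≤ a₁) :
    ∃ C : ℝ≥0, ∀ f g : Rn n → ℝ, Measurable f → ∀ (x : Rn n) (k : ℕ),
      dyadicMax n a₁ a₂ k f g x ≤
        C * ENNReal.ofReal (2 ^ (k * (a₂ - n) / a₂)) * HLMax n f x * sphMax n g x := by
  set A : ℝ := 2 ^ |(n - a₂) / a₂|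
  refine ⟨A.toNNReal * (volume (ball (0 : Rn n) 1)).toNNReal, fun f g hf x k =>
    iSup₂_le fun t₁ ht₁ => iSup₂_le fun t₂ ht₂ => ?_⟩
  set B : ℝ := 2 ^ (k * (a₂ - n) / a₂)
  set D := {y : Rn n | 2 ^ (-(k : ℝ)) ≤ 1 - ‖y‖ ^ a₁ ∧ 1 - ‖y‖ ^ a₁ ≤ 2 ^ (1 - (k : ℝ))}
  have hDm : MeasurableSet D := (measurableSet_le_one_sub_rpow _ _ _).preimage measurable_norm
  have hpos : ∀ y ∈ D, 0 < 1 - ‖y‖ ^ a₁ := fun y hy =>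
    (Real.rpow_pos_of_pos two_pos _).trans_le hy.1
  have hD : D ⊆ ball 0 1 := fun y hy =>
    mem_ball_zero_iff.2 (lt_one_of_one_sub_rpow_pos ha₁ (hpos y hy))
  have hω : ∀ y ∈ D, omegaW a₁ a₂ y ^ ((n : ℝ) - a₂) ≤ A * B := fun y hy =>
    (radialWeight_rpow_le_of_dyadic hy.1 hy.2).trans_eq <| by
      rw [neg_mul, ← mul_neg, neg_sub]
  have hfm : Measurable fun y : Rn n => ENNReal.ofReal (f (x - t₁ • y)) :=
    (hf.comp (by fun_prop)).ennreal_ofReal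
  calc dyadicAvg n a₁ a₂ k f g t₁ t₂ x
      ≤ ∫⁻ y in D, ENNReal.ofReal (f (x - t₁ • y)) * ENNReal.ofReal (A * B) * sphMax n g x :=
        setLIntegral_mono' hDm fun y hy => by
          gcongr
          · exact hω y hy
          · exact sphAvgE_le_sphMax x (mul_pos ht₂ (Real.rpow_pos_of_pos (hpos y hy) _))
    _ = (∫⁻ y in D, ENNReal.ofReal (f (x - t₁ • y))) * ENNReal.ofReal (A * B) * sphMax n g x := by
        rw [lintegral_mul_const _ (hfm.mul_const _), lintegral_mul_const _ hfm]
    _ ≤ (∫⁻ y in ball 0 1, ENNReal.ofReal (f (x - t₁ • y))) * ENNReal.ofReal (A * B) *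
          sphMax n g x := by
        gcongr
    _ ≤ (ENNReal.ofReal (1 ^ n) * volume (ball (0 : Rn n) 1) * HLMax n f x) *
          ENNReal.ofReal (A * B) * sphMax n g x := by
        gcongr
        exact setLIntegral_ball_zero_le_HLMax x hf ht₁ one_pos
    _ = _ := by
        rw [one_pow, ENNReal.ofReal_one, one_mul, ENNReal.ofReal_mul (by positivity),
          ENNReal.coe_mul, ENNReal.coe_toNNReal measure_ball_lt_top.ne]
        simp only [ENNReal.ofReal]
        ring

lemma exists_dyadicMax_le_sphMax_mul_HLMax (ha₁ : 0 < a₁) (ha₁n : a₁ ≤ n) (ha₂ : 0 < a₂) :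
    ∃ C : ℝ≥0, ∀ f g : Rn n → ℝ, Measurable f → Measurable g → ∀ (x : Rn n) (k : ℕ),
      dyadicMax n a₁ a₂ k f g x ≤
        C * ENNReal.ofReal (2 ^ (-(k : ℝ) * n / a₂)) * sphMax n f x * HLMax n g x := by
  have : NeZero n := ⟨by rintro rfl; exact ha₁.not_ge (by simpa using ha₁n)⟩
  obtain ⟨C₁, hC₁⟩ := exists_setLIntegral_preimage_norm_le_sphMax n
  obtain ⟨C₂, hC₂⟩ := exists_lintegral_Ioc_sphAvgE_le_HLMax n
  set A : ℝ := 2 ^ (n / a₂)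
  refine ⟨C₁ * C₂ * (a₂ / a₁).toNNReal * A.toNNReal, fun f g hf hg x k =>
    iSup₂_le fun t₁ ht₁ => iSup₂_le fun t₂ ht₂ => ?_⟩
  set B : ℝ := 2 ^ (-(k : ℝ) * n / a₂)
  set J := {r : ℝ | 2 ^ (-(k : ℝ)) ≤ 1 - r ^ a₁ ∧ 1 - r ^ a₁ ≤ 2 ^ (1 - (k : ℝ))}
  have hJm : MeasurableSet J := measurableSet_le_one_sub_rpow _ _ _
  set ω := radialWeight a₁ a₂
  set S : ℝ := (2 ^ (1 - (k : ℝ))) ^ (1 / a₂)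
  set K : ℝ → ℝ≥0∞ := fun r => ENNReal.ofReal (ω r ^ (n - a₂)) * sphAvgE n g x (t₂ * ω r)
  have hK : Measurable K :=
    (measurable_radialWeight.pow_const _).ennreal_ofReal.mul
      ((measurable_sphAvgE x hg).comp (measurable_radialWeight.const_mul _))
  calc dyadicAvg n a₁ a₂ k f g t₁ t₂ x
      = ∫⁻ y in norm ⁻¹' J, ENNReal.ofReal (f (x - t₁ • y)) * K ‖y‖ := by
        simp only [K, ← mul_assoc]
        rfl
    _ ≤ C₁ * sphMax n f x * ∫⁻ r in J ∩ Ioi 0, ENNReal.ofReal (r ^ (n - 1)) * K r :=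
        hC₁ f K hf hK J hJm x t₁ ht₁
    _ ≤ C₁ * sphMax n f x * (ENNReal.ofReal (a₂ / a₁) *
          ∫⁻ s in Ioc 0 S, ENNReal.ofReal (s ^ (n - 1)) * sphAvgE n g x (t₂ * s)) := by
        gcongr
        exact setLIntegral_pow_mul_comp_radialWeight_le (NeZero.ne n) ha₁ ha₁n ha₂
          (hJm.inter measurableSet_Ioi)
          (fun r hr => ⟨hr.2, (Real.rpow_pos_of_pos two_pos _).trans_le hr.1.1⟩)
          (fun r hr => hr.1.2) fun s => sphAvgE n g x (t₂ * s)
    _ ≤ C₁ * sphMax n f x * (ENNReal.ofReal (a₂ / a₁) *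
          (C₂ * ENNReal.ofReal (S ^ n) * HLMax n g x)) := by
        gcongr
        exact hC₂ g hg x t₂ S ht₂ (by positivity)
    _ = _ := by
        rw [two_rpow_one_sub_rpow_one_div_pow, ENNReal.ofReal_mul (by positivity)]
        push_cast
        simp only [ENNReal.ofReal]
        ring

end DyadicBounds

theorem dyadic_maximal_pointwise_bounds_general
    (n : ℕ) (a₁ a₂ : ℝ) (ha₁ : 0 < a₁) (ha₁n : a₁ ≤ n) (ha₂ : 0 < a₂) :
    ∃ C : ℝ≥0, ∀ f g : Rn n → ℝ,
      Measurable f → Measurable g → (∀ y, 0 ≤ f y) → (∀ y, 0 ≤ g y) →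
      ∀ (x : Rn n) (k : ℕ),
        dyadicMax n a₁ a₂ k f g x ≤
          (C : ℝ≥0∞) * ENNReal.ofReal ((2 : ℝ) ^ ((k : ℝ) * (a₂ - n) / a₂)) *
            HLMax n f x * sphMax n g x ∧
        dyadicMax n a₁ a₂ k f g x ≤
          (C : ℝ≥0∞) * ENNReal.ofReal ((2 : ℝ) ^ (-(k : ℝ) * n / a₂)) *
            sphMax n f x * HLMax n g x := by
  obtain ⟨C₁, hC₁⟩ := exists_dyadicMax_le_HLMax_mul_sphMax n a₂ ha₁.le
  obtain ⟨C₂, hC₂⟩ := exists_dyadicMax_le_sphMax_mul_HLMax ha₁ ha₁n ha₂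
  refine ⟨max C₁ C₂, fun f g hf hg _ _ x k =>
    ⟨(hC₁ f g hf x k).trans ?_, (hC₂ f g hf hg x k).trans ?_⟩⟩
  · gcongr
    exact le_max_left _ _
  · gcongr
    exact le_max_right _ _

/-- The two pointwise bounds (2.7) and (2.10) of the paper for the dyadic
maximal operators `ℳ^k` in the regime `a₁ ≤ n < a₂`. -/
theorem dyadic_maximal_pointwise_bounds
    (n : ℕ) (hn : 2 ≤ n) (a₁ a₂ : ℝ) (ha₁ : 1 ≤ a₁) (ha₂ : 1 ≤ a₂)
    (ha₁n : a₁ ≤ n) (ha₂n : (n : ℝ) < a₂) :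
    ∃ C : ℝ≥0, ∀ f g : Rn n → ℝ,
      Measurable f → Measurable g → (∀ y, 0 ≤ f y) → (∀ y, 0 ≤ g y) →
      ∀ (x : Rn n) (k : ℕ), 1 ≤ k →
        dyadicMax n a₁ a₂ k f g x ≤
          (C : ℝ≥0∞) * ENNReal.ofReal ((2 : ℝ) ^ ((k : ℝ) * (a₂ - n) / a₂)) *
            HLMax n f x * sphMax n g x ∧
        dyadicMax n a₁ a₂ k f g x ≤
          (C : ℝ≥0∞) * ENNReal.ofReal ((2 : ℝ) ^ (-(k : ℝ) * n / a₂)) *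
            sphMax n f x * HLMax n g x := by
  obtain ⟨C, hC⟩ := dyadic_maximal_pointwise_bounds_general n a₁ a₂
    (one_pos.trans_le ha₁) ha₁n (one_pos.trans_le ha₂)
  exact ⟨C, fun f g hf hg hf0 hg0 x k _ => hC f g hf hg hf0 hg0 x k⟩
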